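/- Every element y^m w of H^1 with m ≥ 0 and w a word in H^0 admits a unique representation y^m w = w0 + w1 *̄ y + w2 *̄ y^{*̄2} + ⋯ + wm *̄ y^{*̄m} with w0, w1, …, wm ∈ H^0, where y^{*̄i} denotes the i-fold n-harmonic product of y with itself; consequently (H^1, *̄) is isomorphic to the polynomial algebra (H^0, *̄)[y]. -/

import Mathlib

open scoped BigOperators

/-- The two-letter alphabet {x, y}. -/
inductive Letter : Type
  | x : Letter
  | y : Letter
deriving DecidableEq

/-- `H = ℚ⟨x,y⟩`, the noncommutative polynomial ring over ℚ in two
indeterminates, realized as the monoid algebra of the free monoid on `{x,y}`. -/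
abbrev H : Type := MonoidAlgebra ℚ (FreeMonoid Letter)

namespace H

/-- The monomial (word) of `H` corresponding to an element of the free monoid. -/
noncomputable def word (w : FreeMonoid Letter) : H := MonoidAlgebra.single w 1

/-- The generator `x`. -/
noncomputable def X : H := word (FreeMonoid.of Letter.x)

/-- The generator `y`. -/
noncomputable def Y : H := word (FreeMonoid.of Letter.y)

/-- The word `z_k = x^{k-1} y` (for `k ≥ 1`). -/
def zW (k : ℕ) : FreeMonoid Letter :=
  FreeMonoid.ofList (List.replicate (k - 1) Letter.x ++ [Letter.y])

/-- `z_k = x^{k-1} y` as an element of `H`. -/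
noncomputable def z (k : ℕ) : H := word (zW k)

/-- A list `[k₁,…,kₙ]` gives the word `z_{k₁} z_{k₂} ⋯ z_{kₙ}`. -/
def zListW (ks : List ℕ) : FreeMonoid Letter :=
  FreeMonoid.ofList (ks.flatMap fun k => List.replicate (k - 1) Letter.x ++ [Letter.y])

/-- `H¹ = ℚ + Hy` as a ℚ-submodule of `H`. -/
noncomputable def H1 : Submodule ℚ H :=
  LinearMap.range (LinearMap.mulRight ℚ Y) ⊔ Submodule.span ℚ {1}

/-- `H⁰ = ℚ + xHy` as a ℚ-submodule of `H`. -/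
noncomputable def H0 : Submodule ℚ H :=
  LinearMap.range ((LinearMap.mulRight ℚ Y).comp (LinearMap.mulLeft ℚ X)) ⊔
    Submodule.span ℚ {1}

/-- Parse a word of `H¹` into the exponent list of its `z`-decomposition:
`z_{k₁}⋯z_{kₙ} ↦ [k₁,…,kₙ]` (auxiliary accumulator version). -/
def toZAux : List Letter → ℕ → List ℕ
  | [], _ => []
  | Letter.x :: r, n => toZAux r (n + 1)
  | Letter.y :: r, n => (n + 1) :: toZAux r 0

/-- The `z`-decomposition of a word of `H¹`. -/
def toZ (w : FreeMonoid Letter) : List ℕ := toZAux (FreeMonoid.toList w) 0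

/-- The harmonic product on words of `H¹` (via `z`-decompositions):
`1 * w = w * 1 = w` and
`z_k w₁ * z_l w₂ = z_k (w₁ * z_l w₂) + z_l (z_k w₁ * w₂) + z_{k+l} (w₁ * w₂)`. -/
noncomputable def harmW : List ℕ → List ℕ → H
  | [], w => word (zListW w)
  | k :: w1, [] => word (zListW (k :: w1))
  | k :: w1, l :: w2 =>
      z k * harmW w1 (l :: w2) + z l * harmW (k :: w1) w2 + z (k + l) * harmW w1 w2
termination_by w1 w2 => w1.length + w2.length
decreasing_by all_goals simp [Nat.lt_succ_iff] <;> omega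

/-- The n-harmonic product on words of `H¹`:
`1 *̄ w = w *̄ 1 = w` and
`z_k w₁ *̄ z_l w₂ = z_k (w₁ *̄ z_l w₂) + z_l (z_k w₁ *̄ w₂) − z_{k+l} (w₁ *̄ w₂)`. -/
noncomputable def nharmW : List ℕ → List ℕ → H
  | [], w => word (zListW w)
  | k :: w1, [] => word (zListW (k :: w1))
  | k :: w1, l :: w2 =>
      z k * nharmW w1 (l :: w2) + z l * nharmW (k :: w1) w2 - z (k + l) * nharmW w1 w2
termination_by w1 w2 => w1.length + w2.length
decreasing_by all_goals simp [Nat.lt_succ_iff] <;> omega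

/-- The harmonic product `*` on `H¹`, extended ℚ-bilinearly. -/
noncomputable def harm (a b : H) : H :=
  Finsupp.sum a.coeff fun w1 c1 =>
    Finsupp.sum b.coeff fun w2 c2 => (c1 * c2) • harmW (toZ w1) (toZ w2)

/-- The n-harmonic product `*̄` on `H¹`, extended ℚ-bilinearly. -/
noncomputable def nharm (a b : H) : H :=
  Finsupp.sum a.coeff fun w1 c1 =>
    Finsupp.sum b.coeff fun w2 c2 => (c1 * c2) • nharmW (toZ w1) (toZ w2)

/-- The letter exchange `τ(x) = y`, `τ(y) = x`. -/
def τ : Letter → Letter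
  | Letter.x => Letter.y
  | Letter.y => Letter.x

/-- `δ(w) = 1` if `w` is the empty word, `0` otherwise. -/
def δ : List Letter → ℚ
  | [] => 1
  | _ :: _ => 0

/-- The shuffle product on words:
`1 ш w = w ш 1 = w` and `u₁w₁ ш u₂w₂ = u₁(w₁ ш u₂w₂) + u₂(u₁w₁ ш w₂)`. -/
noncomputable def shW : List Letter → List Letter → H
  | [], w => word (FreeMonoid.ofList w)
  | u :: w, [] => word (FreeMonoid.ofList (u :: w))
  | u1 :: w1, u2 :: w2 =>
      word (FreeMonoid.of u1) * shW w1 (u2 :: w2) +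
        word (FreeMonoid.of u2) * shW (u1 :: w1) w2
termination_by w1 w2 => w1.length + w2.length
decreasing_by all_goals simp [Nat.lt_succ_iff]

/-- The n-shuffle product on words: `1 ш̄ w = w ш̄ 1 = w` and
`u₁w₁ ш̄ u₂w₂ = u₁(w₁ ш̄ u₂w₂) + u₂(u₁w₁ ш̄ w₂) − δ(w₁)τ(u₁)u₂w₂ − δ(w₂)τ(u₂)u₁w₁`. -/
noncomputable def nshW : List Letter → List Letter → H
  | [], w => word (FreeMonoid.ofList w)
  | u :: w, [] => word (FreeMonoid.ofList (u :: w))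
  | u1 :: w1, u2 :: w2 =>
      word (FreeMonoid.of u1) * nshW w1 (u2 :: w2) +
        word (FreeMonoid.of u2) * nshW (u1 :: w1) w2 -
        δ w1 • word (FreeMonoid.ofList (τ u1 :: u2 :: w2)) -
        δ w2 • word (FreeMonoid.ofList (τ u2 :: u1 :: w1))
termination_by w1 w2 => w1.length + w2.length
decreasing_by all_goals simp [Nat.lt_succ_iff]

/-- The shuffle product `ш` on `H`, extended ℚ-bilinearly. -/
noncomputable def sh (a b : H) : H :=
  Finsupp.sum a.coeff fun w1 c1 =>
    Finsupp.sum b.coeff fun w2 c2 =>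
      (c1 * c2) • shW (FreeMonoid.toList w1) (FreeMonoid.toList w2)

/-- The n-shuffle product `ш̄` on `H`, extended ℚ-bilinearly. -/
noncomputable def nsh (a b : H) : H :=
  Finsupp.sum a.coeff fun w1 c1 =>
    Finsupp.sum b.coeff fun w2 c2 =>
      (c1 * c2) • nshW (FreeMonoid.toList w1) (FreeMonoid.toList w2)

/-- `S₁`: the ℚ-algebra endomorphism of `H` with `S₁(x) = x`, `S₁(y) = x + y`. -/
noncomputable def S1 : H →ₐ[ℚ] H :=
  MonoidAlgebra.lift ℚ H (FreeMonoid Letter)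
    (FreeMonoid.lift fun u => match u with
      | Letter.x => X
      | Letter.y => X + Y)

/-- `S₂`: the ℚ-algebra endomorphism of `H` with `S₂(x) = x`, `S₂(y) = y − x`. -/
noncomputable def S2 : H →ₐ[ℚ] H :=
  MonoidAlgebra.lift ℚ H (FreeMonoid Letter)
    (FreeMonoid.lift fun u => match u with
      | Letter.x => X
      | Letter.y => Y - X)

/-- `S` on a word: `S(1) = 1` and `S(Fy) = S₁(F)y`. -/
noncomputable def SW (w : FreeMonoid Letter) : H :=
  match (FreeMonoid.toList w).getLast? with
  | some Letter.y =>
      S1 (word (FreeMonoid.ofList (FreeMonoid.toList w).dropLast)) * Y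
  | _ => word w

/-- The ℚ-linear map `S : H¹ → H¹` with `S(1) = 1`, `S(Fy) = S₁(F)y`. -/
noncomputable def S (a : H) : H := Finsupp.sum a.coeff fun w c => c • SW w

/-- `S̃` on a word: `S̃(1) = 1` and `S̃(Fy) = S₂(F)y`. -/
noncomputable def StW (w : FreeMonoid Letter) : H :=
  match (FreeMonoid.toList w).getLast? with
  | some Letter.y =>
      S2 (word (FreeMonoid.ofList (FreeMonoid.toList w).dropLast)) * Y
  | _ => word w

/-- The ℚ-linear map `S̃ : H¹ → H¹` with `S̃(1) = 1`, `S̃(Fy) = S₂(F)y`. -/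
noncomputable def St (a : H) : H := Finsupp.sum a.coeff fun w c => c • StW w

/-- The multiple zeta value `ζ(k₁,…,kₙ)`: the sum over strictly decreasing
tuples `m₁ > m₂ > ⋯ > mₙ > 0` of `1/(m₁^{k₁}⋯mₙ^{kₙ})`. -/
noncomputable def mzeta (ks : List ℕ) : ℝ :=
  ∑' m : {f : Fin ks.length → ℕ // (∀ i, 0 < f i) ∧
      ∀ i j : Fin ks.length, i < j → f j < f i},
    ∏ i : Fin ks.length, ((m.1 i : ℝ) ^ ks.get i)⁻¹

/-- The non-strict multiple zeta value `ζ̄(k₁,…,kₙ)`: the sum over weakly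
decreasing tuples `m₁ ≥ m₂ ≥ ⋯ ≥ mₙ > 0` of `1/(m₁^{k₁}⋯mₙ^{kₙ})`. -/
noncomputable def nmzeta (ks : List ℕ) : ℝ :=
  ∑' m : {f : Fin ks.length → ℕ // (∀ i, 0 < f i) ∧
      ∀ i j : Fin ks.length, i ≤ j → f j ≤ f i},
    ∏ i : Fin ks.length, ((m.1 i : ℝ) ^ ks.get i)⁻¹

/-- The evaluation map `Z : H⁰ → ℝ`, `Z(1) = 1`,
`Z(z_{k₁}⋯z_{kₙ}) = ζ(k₁,…,kₙ)` (extended ℚ-linearly to `H`). -/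
noncomputable def Z (a : H) : ℝ := Finsupp.sum a.coeff fun w c => (c : ℝ) * mzeta (toZ w)

/-- The n-evaluation map `Z̄ : H⁰ → ℝ`, `Z̄(1) = 1`,
`Z̄(z_{k₁}⋯z_{kₙ}) = ζ̄(k₁,…,kₙ)` (extended ℚ-linearly to `H`). -/
noncomputable def Zbar (a : H) : ℝ := Finsupp.sum a.coeff fun w c => (c : ℝ) * nmzeta (toZ w)

/-- `i`-fold n-harmonic power: `a^{*̄ 0} = 1`, `a^{*̄ (i+1)} = a *̄ a^{*̄ i}`. -/
noncomputable def nharmPow : ℕ → H → H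
  | 0, _ => 1
  | i + 1, a => nharm a (nharmPow i a)

/-- `i`-fold n-shuffle power: `a^{ш̄ 0} = 1`, `a^{ш̄ (i+1)} = a ш̄ a^{ш̄ i}`. -/
noncomputable def nshPow : ℕ → H → H
  | 0, _ => 1
  | i + 1, a => nsh a (nshPow i a)

end H

open H

/-!
Grade `H¹ = ⨁ yⁱH⁰` by the number `i` of leading `y`s and let `Fₘ = H⁰ + yH⁰ + ⋯ + yᵐ⁻¹H⁰`.
Every `z_k` with `k ≥ 2` maps `H¹` into `H⁰`, so modulo `H⁰` the recursion for `*̄` collapses to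
`c *̄ yv ≡ y(c *̄ v)` for `c ∈ H⁰` and to `y *̄ yv ≡ y(yv + y *̄ v)`. Iterating,
`c *̄ y^{*̄m} ≡ m! yᵐc` modulo `Fₘ`. As `m!` is invertible in `ℚ`, the change from the products
`yᵐc` to the products `c *̄ y^{*̄m}` is triangular with invertible diagonal.
-/

section Triangular

variable {R V W : Type*} [Ring R] [AddCommGroup V] [Module R V] [AddCommGroup W] [Module R W]

theorem sup_map_eq_sup_map_of_sub_mem {F : Submodule R V} {A : Submodule R W} {f g : W →ₗ[R] V}
    (h : ∀ a ∈ A, f a - g a ∈ F) : F ⊔ A.map f = F ⊔ A.map g := by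
  refine le_antisymm (sup_le le_sup_left ?_) (sup_le le_sup_left ?_)
  · rintro _ ⟨a, ha, rfl⟩
    exact Submodule.mem_sup.2 ⟨_, h a ha, _, Submodule.mem_map_of_mem ha, sub_add_cancel _ _⟩
  · rintro _ ⟨a, ha, rfl⟩
    have h' : g a - f a ∈ F := by simpa using neg_mem (h a ha)
    exact Submodule.mem_sup.2 ⟨_, h', _, Submodule.mem_map_of_mem ha, sub_add_cancel _ _⟩

variable {F : ℕ → Submodule R V} {A : Submodule R W} {g : ℕ → W →ₗ[R] V}

theorem sum_mem_of_succ_eq_sup_map (succ : ∀ m, F (m + 1) = F m ⊔ A.map (g m)) {m : ℕ}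
    {c : Fin m → W} (hc : ∀ i, c i ∈ A) : ∑ i : Fin m, g i (c i) ∈ F m := by
  have mono : Monotone F := monotone_nat_of_le_succ fun m => succ m ▸ le_sup_left
  refine Submodule.sum_mem _ fun i _ => mono (Nat.succ_le_of_lt i.2) ?_
  rw [succ]
  exact Submodule.mem_sup_right (Submodule.mem_map_of_mem (hc i))

theorem existsUnique_sum_of_succ_eq_sup_map (zero : F 0 = ⊥)
    (succ : ∀ m, F (m + 1) = F m ⊔ A.map (g m))
    (injective : ∀ m, ∀ a ∈ A, g m a ∈ F m → a = 0) {m : ℕ} {v : V} (hv : v ∈ F m) :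
    ∃! c : Fin m → W, (∀ i, c i ∈ A) ∧ v = ∑ i : Fin m, g i (c i) := by
  induction m generalizing v with
  | zero =>
    have hv0 : v = 0 := by simpa [zero] using hv
    exact ⟨Fin.elim0, ⟨fun i => i.elim0, by simp [hv0]⟩, fun _ _ => Subsingleton.elim _ _⟩
  | succ m ih =>
    rw [succ] at hv
    obtain ⟨u, hu, _, ⟨a, ha, rfl⟩, rfl⟩ := Submodule.mem_sup.1 hv
    obtain ⟨c, ⟨hc, hsum⟩, hunique⟩ := ih hu
    refine ⟨Fin.snoc c a, ⟨Fin.lastCases (by simpa using ha) (by simpa using hc), ?_⟩, ?_⟩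
    · simp [Fin.sum_univ_castSucc, hsum]
    · rintro d ⟨hd, hsum'⟩
      rw [Fin.sum_univ_castSucc, Fin.val_last] at hsum'
      have hlow := sum_mem_of_succ_eq_sup_map succ fun i : Fin m => hd i.castSucc
      have hdiff : g m (a - d (Fin.last m)) = ∑ i : Fin m, g i (d i.castSucc) - u := by
        rw [map_sub, sub_eq_sub_iff_add_eq_add, add_comm, hsum']
        rfl
      have hlast : a = d (Fin.last m) := sub_eq_zero.1 <|
        injective m _ (sub_mem ha (hd _)) (hdiff ▸ sub_mem hlow hu)
      have hfirst : Fin.init d = c :=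
        hunique _ ⟨fun i => hd i.castSucc, add_right_cancel (hlast ▸ hsum')⟩
      rw [← hfirst, hlast, Fin.snoc_init_self]

end Triangular

namespace H

theorem word_one : word 1 = 1 := rfl

theorem word_mul_word (u v : FreeMonoid Letter) : word u * word v = word (u * v) := by
  simp [word, MonoidAlgebra.single_mul_single]

theorem word_pow (u : FreeMonoid Letter) (n : ℕ) : word u ^ n = word (u ^ n) := by
  simp [word, MonoidAlgebra.single_pow]

theorem word_induction {p : H → Prop} (a : H) (word : ∀ u, p (word u))
    (add : ∀ a b, p a → p b → p (a + b)) (smul : ∀ (r : ℚ) a, p a → p (r • a)) : p a :=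
  MonoidAlgebra.induction_on a word add smul

theorem ofList_replicate (l : Letter) (n : ℕ) :
    FreeMonoid.ofList (List.replicate n l) = FreeMonoid.of l ^ n := by
  induction n with
  | zero => rfl
  | succ n ih => rw [pow_succ', ← ih]; rfl

theorem z_one : z 1 = Y := rfl

theorem z_eq_X_pow_mul_Y (k : ℕ) : z k = X ^ (k - 1) * Y := by
  rw [X, Y, word_pow, word_mul_word, ← ofList_replicate]
  rfl

theorem word_zListW_cons (k : ℕ) (ks : List ℕ) :
    word (zListW (k :: ks)) = z k * word (zListW ks) := by
  rw [z, word_mul_word]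
  rfl

theorem one_mem_H0 : 1 ∈ H0 :=
  Submodule.mem_sup_right (Submodule.mem_span_singleton_self 1)

theorem X_mul_mul_Y_mem_H0 (a : H) : X * a * Y ∈ H0 :=
  Submodule.mem_sup_left ⟨a, rfl⟩

theorem one_mem_H1 : 1 ∈ H1 :=
  Submodule.mem_sup_right (Submodule.mem_span_singleton_self 1)

theorem mul_Y_mem_H1 (a : H) : a * Y ∈ H1 :=
  Submodule.mem_sup_left ⟨a, rfl⟩

theorem H0_le_H1 : H0 ≤ H1 := by
  refine sup_le_sup_right ?_ _
  rintro _ ⟨a, rfl⟩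
  exact ⟨X * a, rfl⟩

theorem exists_Y_mul_eq_mul_Y {a : H} (ha : a ∈ H1) : ∃ b, Y * a = b * Y := by
  obtain ⟨_, ⟨b, rfl⟩, _, hr, rfl⟩ := Submodule.mem_sup.1 ha
  obtain ⟨r, rfl⟩ := Submodule.mem_span_singleton.1 hr
  exact ⟨Y * b + r • 1, by simp [mul_add, add_mul, mul_assoc]⟩

theorem z_mul_mem_H1 (k : ℕ) {a : H} (ha : a ∈ H1) : z k * a ∈ H1 := by
  obtain ⟨b, hb⟩ := exists_Y_mul_eq_mul_Y ha
  rw [z_eq_X_pow_mul_Y, mul_assoc, hb, ← mul_assoc]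
  exact mul_Y_mem_H1 _

theorem z_mul_mem_H0 {k : ℕ} (hk : 2 ≤ k) {a : H} (ha : a ∈ H1) : z k * a ∈ H0 := by
  obtain ⟨j, rfl⟩ := Nat.exists_eq_add_of_le' hk
  obtain ⟨b, hb⟩ := exists_Y_mul_eq_mul_Y ha
  have factor : z (j + 2) * a = X * (X ^ j * b) * Y := by
    rw [z_eq_X_pow_mul_Y, mul_assoc, hb, Nat.add_succ_sub_one, pow_succ']
    simp only [mul_assoc]
  exact factor ▸ X_mul_mul_Y_mem_H0 _

theorem Y_pow_mul_mem_H1 (m : ℕ) {a : H} (ha : a ∈ H1) : Y ^ m * a ∈ H1 := by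
  induction m with
  | zero => simpa using ha
  | succ m ih =>
    rw [pow_succ', mul_assoc]
    exact z_mul_mem_H1 1 ih

section Span

variable {N : Submodule ℚ H}

theorem range_le_of_word_mem {f : H →ₗ[ℚ] H} (hf : ∀ u, f (word u) ∈ N) :
    LinearMap.range f ≤ N := by
  rintro _ ⟨a, rfl⟩
  induction a using word_induction with
  | word u => exact hf u
  | add a b ha hb => rw [map_add]; exact add_mem ha hb
  | smul r a ha => rw [map_smul]; exact N.smul_mem r ha

theorem exists_X_pow_mul_word_mul_Y_eq_z_mul (one_mem : 1 ∈ N)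
    (z_mul_mem : ∀ k, 1 ≤ k → ∀ a ∈ N, z k * a ∈ N) (n : ℕ) (u : FreeMonoid Letter) :
    ∃ k, n < k ∧ ∃ a ∈ N, X ^ n * word u * Y = z k * a := by
  induction u using FreeMonoid.inductionOn' generalizing n with
  | one => exact ⟨n + 1, n.lt_succ_self, 1, one_mem, by simp [z_eq_X_pow_mul_Y, word_one]⟩
  | of_mul l u ih =>
    cases l with
    | x =>
      obtain ⟨k, hk, a, ha, h⟩ := ih (n + 1)
      refine ⟨k, by omega, a, ha, ?_⟩
      rw [← h, ← word_mul_word, pow_succ, X]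
      simp only [mul_assoc]
    | y =>
      obtain ⟨k, hk, a, ha, h⟩ := ih 0
      refine ⟨n + 1, n.lt_succ_self, z k * a, z_mul_mem k hk a ha, ?_⟩
      rw [← h, ← word_mul_word, z_eq_X_pow_mul_Y, Y]
      simp only [pow_zero, one_mul, mul_assoc, Nat.add_sub_cancel]

theorem H1_le (one_mem : 1 ∈ N) (z_mul_mem : ∀ k, 1 ≤ k → ∀ a ∈ N, z k * a ∈ N) : H1 ≤ N := by
  refine sup_le (range_le_of_word_mem fun u => ?_)
    ((Submodule.span_singleton_le_iff_mem _ _).2 one_mem)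
  obtain ⟨k, hk, a, ha, h⟩ := exists_X_pow_mul_word_mul_Y_eq_z_mul one_mem z_mul_mem 0 u
  rw [LinearMap.mulRight_apply, ← one_mul (word u), ← pow_zero X, h]
  exact z_mul_mem k hk a ha

theorem H0_le (one_mem : 1 ∈ N) (z_mul_mem : ∀ k, 2 ≤ k → ∀ a ∈ H1, z k * a ∈ N) : H0 ≤ N := by
  refine sup_le (range_le_of_word_mem fun u => ?_)
    ((Submodule.span_singleton_le_iff_mem _ _).2 one_mem)
  obtain ⟨k, hk, a, ha, h⟩ := exists_X_pow_mul_word_mul_Y_eq_z_mul one_mem_H1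
    (fun k _ a => z_mul_mem_H1 k) 1 u
  rw [LinearMap.comp_apply, LinearMap.mulLeft_apply, LinearMap.mulRight_apply, ← pow_one X, h]
  exact z_mul_mem k hk a ha

end Span

theorem toZAux_replicate_x_append (j n : ℕ) (l : List Letter) :
    toZAux (List.replicate j Letter.x ++ l) n = toZAux l (n + j) := by
  induction j generalizing n with
  | zero => rfl
  | succ j ih =>
    rw [List.replicate_succ, List.cons_append, toZAux, ih, add_right_comm, add_assoc]

theorem toZ_zW_mul {k : ℕ} (hk : 1 ≤ k) (u : FreeMonoid Letter) : toZ (zW k * u) = k :: toZ u := by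
  rw [toZ, zW, FreeMonoid.toList_mul, FreeMonoid.toList_ofList, List.append_assoc,
    toZAux_replicate_x_append, List.singleton_append, toZAux, zero_add, Nat.sub_add_cancel hk, toZ]

theorem add_nharm (a b c : H) : nharm (a + b) c = nharm a c + nharm b c := by
  rw [nharm, MonoidAlgebra.coeff_add, Finsupp.sum_add_index']
  · rfl
  · simp
  · simp [add_mul, add_smul, Finsupp.sum_add]

theorem nharm_add (a b c : H) : nharm a (b + c) = nharm a b + nharm a c := by
  simp only [nharm, ← Finsupp.sum_add]
  refine Finsupp.sum_congr fun u _ => ?_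
  rw [MonoidAlgebra.coeff_add, Finsupp.sum_add_index'] <;> simp [mul_add, add_smul]

theorem smul_nharm (r : ℚ) (a b : H) : nharm (r • a) b = r • nharm a b := by
  rw [nharm, MonoidAlgebra.coeff_smul, Finsupp.sum_smul_index']
  · simp [nharm, Finsupp.smul_sum, smul_smul, mul_assoc]
  · simp

theorem nharm_smul (r : ℚ) (a b : H) : nharm a (r • b) = r • nharm a b := by
  simp only [nharm, Finsupp.smul_sum]
  refine Finsupp.sum_congr fun u _ => ?_
  rw [MonoidAlgebra.coeff_smul, Finsupp.sum_smul_index'] <;> simp [smul_smul, mul_left_comm]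

/-- The n-harmonic product as a bilinear map on all of `H`. Words outside `H¹` enter through the
convention that `toZ` ignores trailing `x`s. -/
noncomputable def nharmₗ : H →ₗ[ℚ] H →ₗ[ℚ] H :=
  LinearMap.mk₂ ℚ nharm add_nharm smul_nharm nharm_add nharm_smul

theorem nharm_word_word (u v : FreeMonoid Letter) :
    nharm (word u) (word v) = nharmW (toZ u) (toZ v) := by
  simp [nharm, word]

theorem nharm_z_mul_z_mul {k l : ℕ} (hk : 1 ≤ k) (hl : 1 ≤ l) (a b : H) :
    nharm (z k * a) (z l * b) =
      z k * nharm a (z l * b) + z l * nharm (z k * a) b - z (k + l) * nharm a b := by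
  induction a using word_induction with
  | add a a' ha ha' => simp only [mul_add, add_nharm, ha, ha']; abel
  | smul r a ha => simp only [mul_smul_comm, smul_nharm, ha, smul_add, smul_sub]
  | word u =>
    induction b using word_induction with
    | add b b' hb hb' => simp only [mul_add, nharm_add, hb, hb']; abel
    | smul r b hb => simp only [mul_smul_comm, nharm_smul, hb, smul_add, smul_sub]
    | word v =>
      simp only [z, word_mul_word, nharm_word_word, toZ_zW_mul hk, toZ_zW_mul hl]
      rw [nharmW, z, z, z]

theorem one_nharm_word (u : FreeMonoid Letter) : nharm 1 (word u) = word (zListW (toZ u)) := by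
  rw [← word_one, nharm_word_word]
  exact nharmW.eq_1 _

theorem word_nharm_one (u : FreeMonoid Letter) : nharm (word u) 1 = word (zListW (toZ u)) := by
  rw [← word_one, nharm_word_word]
  change nharmW (toZ u) [] = _
  cases toZ u <;> rw [nharmW]

theorem one_nharm_z_mul {k : ℕ} (hk : 1 ≤ k) (a : H) : nharm 1 (z k * a) = z k * nharm 1 a := by
  induction a using word_induction with
  | add a b ha hb => simp only [mul_add, nharm_add, ha, hb]
  | smul r a ha => simp only [mul_smul_comm, nharm_smul, ha]
  | word u =>
    rw [z, word_mul_word, one_nharm_word, one_nharm_word, toZ_zW_mul hk, word_zListW_cons, z]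

theorem one_nharm {a : H} (ha : a ∈ H1) : nharm 1 a = a := by
  have fixed : H1 ≤ LinearMap.eqLocus (nharmₗ 1) LinearMap.id :=
    H1_le (one_nharm_word 1) fun k hk a ha => (one_nharm_z_mul hk a).trans (congrArg (z k * ·) ha)
  exact fixed ha

theorem nharm_one_comm (a : H) : nharm a 1 = nharm 1 a := by
  induction a using word_induction with
  | add a b ha hb => rw [add_nharm, nharm_add, ha, hb]
  | smul r a ha => rw [smul_nharm, nharm_smul, ha]
  | word u => rw [word_nharm_one, one_nharm_word]

theorem nharm_one {a : H} (ha : a ∈ H1) : nharm a 1 = a := by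
  rw [nharm_one_comm, one_nharm ha]

theorem word_zListW_mem_H1 (ks : List ℕ) : word (zListW ks) ∈ H1 := by
  induction ks with
  | nil => exact one_mem_H1
  | cons k ks ih => rw [word_zListW_cons]; exact z_mul_mem_H1 k ih

theorem nharmW_mem_H1 (ks ls : List ℕ) : nharmW ks ls ∈ H1 := by
  induction ks, ls using nharmW.induct with
  | case1 ls => rw [nharmW]; exact word_zListW_mem_H1 ls
  | case2 k ks => rw [nharmW]; exact word_zListW_mem_H1 (k :: ks)
  | case3 k ks l ls ih₁ ih₂ ih₃ =>
    rw [nharmW]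
    exact sub_mem (add_mem (z_mul_mem_H1 k ih₁) (z_mul_mem_H1 l ih₂)) (z_mul_mem_H1 (k + l) ih₃)

theorem nharm_mem_H1 (a b : H) : nharm a b ∈ H1 :=
  Submodule.sum_mem _ fun _ _ => Submodule.sum_mem _ fun _ _ =>
    Submodule.smul_mem _ _ (nharmW_mem_H1 _ _)

theorem z_mul_nharm_mem_H0 {k : ℕ} (hk : 2 ≤ k) (a b : H) : z k * nharm a b ∈ H0 :=
  z_mul_mem_H0 hk (nharm_mem_H1 a b)

theorem nharm_mem_H0 {c d : H} (hc : c ∈ H0) (hd : d ∈ H0) : nharm c d ∈ H0 := by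
  suffices H0 ≤ H0.comap (nharmₗ.flip d) from this hc
  refine H0_le ?_ fun k hk a ha => ?_
  · change nharm 1 d ∈ H0
    rwa [one_nharm (H0_le_H1 hd)]
  · suffices H0 ≤ H0.comap (nharmₗ (z k * a)) from this hd
    refine H0_le ?_ fun l hl b _ => ?_
    · change nharm (z k * a) 1 ∈ H0
      rw [nharm_one (z_mul_mem_H1 k ha)]
      exact z_mul_mem_H0 hk ha
    · change nharm (z k * a) (z l * b) ∈ H0
      rw [nharm_z_mul_z_mul (by omega) (by omega)]
      exact sub_mem (add_mem (z_mul_nharm_mem_H0 hk _ _) (z_mul_nharm_mem_H0 hl _ _))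
        (z_mul_nharm_mem_H0 (by omega) _ _)

theorem nharm_Y_mul_sub_mem_H0 {c v : H} (hc : c ∈ H0) (hv : v ∈ H1) :
    nharm c (Y * v) - Y * nharm c v ∈ H0 := by
  suffices H0 ≤ H0.comap (nharmₗ.flip (Y * v) - LinearMap.mulLeft ℚ Y ∘ₗ nharmₗ.flip v) from
    this hc
  refine H0_le ?_ fun k hk a _ => ?_
  · change nharm 1 (z 1 * v) - z 1 * nharm 1 v ∈ H0
    rw [one_nharm hv, one_nharm (z_mul_mem_H1 1 hv), sub_self]
    exact zero_mem _
  · change nharm (z k * a) (z 1 * v) - z 1 * nharm (z k * a) v ∈ H0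
    rw [nharm_z_mul_z_mul (by omega) le_rfl, add_sub_right_comm, add_sub_cancel_right]
    exact sub_mem (z_mul_nharm_mem_H0 hk _ _) (z_mul_nharm_mem_H0 (by omega) _ _)

theorem Y_nharm_z_mul {k : ℕ} (hk : 1 ≤ k) {v : H} (hv : v ∈ H1) :
    nharm Y (z k * v) = Y * (z k * v) + z k * nharm Y v - z (k + 1) * v := by
  have h := nharm_z_mul_z_mul le_rfl hk 1 v
  rwa [mul_one, z_one, one_nharm hv, one_nharm (z_mul_mem_H1 k hv), add_comm 1] at h

theorem Y_nharm_sub_mem_H0 {d : H} (hd : d ∈ H0) : nharm Y d - Y * d ∈ H0 := by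
  suffices H0 ≤ H0.comap (nharmₗ Y - LinearMap.mulLeft ℚ Y) from this hd
  refine H0_le ?_ fun k hk b hb => ?_
  · change nharm Y 1 - Y * 1 ∈ H0
    rw [nharm_one (by simpa using mul_Y_mem_H1 1), mul_one, sub_self]
    exact zero_mem _
  · change nharm Y (z k * b) - Y * (z k * b) ∈ H0
    rw [Y_nharm_z_mul (by omega) hb, add_sub_assoc, add_sub_cancel_left]
    exact sub_mem (z_mul_nharm_mem_H0 hk _ _) (z_mul_mem_H0 (by omega) hb)

theorem Y_nharm_Y_mul_sub_mem_H0 {v : H} (hv : v ∈ H1) :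
    nharm Y (Y * v) - Y * (Y * v + nharm Y v) ∈ H0 := by
  have h := Y_nharm_z_mul le_rfl hv
  rw [z_one] at h
  rw [h, mul_add, sub_sub_cancel_left]
  exact neg_mem (z_mul_mem_H0 le_rfl hv)

theorem coeff_of_y_mul_eq_zero {c : H} (hc : c ∈ H0) (u : FreeMonoid Letter) :
    c.coeff (FreeMonoid.of Letter.y * u) = 0 := by
  obtain ⟨_, ⟨a, rfl⟩, _, hr, rfl⟩ := Submodule.mem_sup.1 hc
  obtain ⟨r, rfl⟩ := Submodule.mem_span_singleton.1 hr
  have hX : (X * a * Y).coeff (FreeMonoid.of Letter.y * u) = 0 := by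
    rw [mul_assoc]
    refine MonoidAlgebra.coeff_single_mul_of_forall_mul_ne _ _ fun d h => ?_
    exact Letter.noConfusion (List.cons.inj h).1
  have hone : (1 : H).coeff (FreeMonoid.of Letter.y * u) = 0 :=
    Finsupp.single_eq_of_ne (List.cons_ne_nil _ _)
  change (X * a * Y + r • 1).coeff _ = 0
  simp [hX, hone]

theorem eq_zero_of_Y_mul_mem_H0 {a : H} (h : Y * a ∈ H0) : a = 0 := by
  refine MonoidAlgebra.coeff_injective (Finsupp.ext fun u => ?_)
  simpa [Y, word] using coeff_of_y_mul_eq_zero h u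

/-- The filtration `H⁰ + yH⁰ + ⋯ + yᵐ⁻¹H⁰` of `H¹` by the number of leading `y`s; at level `m`
fewer than `m` are allowed. -/
noncomputable def yFiltration (m : ℕ) : Submodule ℚ H :=
  ⨆ i < m, H0.map (LinearMap.mulLeft ℚ (Y ^ i))

theorem yFiltration_zero : yFiltration 0 = ⊥ := by
  simp [yFiltration]

theorem yFiltration_succ (m : ℕ) :
    yFiltration (m + 1) = yFiltration m ⊔ H0.map (LinearMap.mulLeft ℚ (Y ^ m)) :=
  Nat.iSup_lt_succ _ m

theorem yFiltration_succ_eq_H0_sup (m : ℕ) :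
    yFiltration (m + 1) = H0 ⊔ (yFiltration m).map (LinearMap.mulLeft ℚ Y) := by
  simp only [yFiltration, Nat.iSup_lt_succ', Submodule.map_iSup, ← Submodule.map_comp,
    pow_succ', pow_zero, LinearMap.mulLeft_mul, LinearMap.mulLeft_one, Submodule.map_id]

theorem Y_pow_mul_mem_yFiltration {i m : ℕ} (hi : i < m) {c : H} (hc : c ∈ H0) :
    Y ^ i * c ∈ yFiltration m :=
  Submodule.mem_iSup_of_mem i <| Submodule.mem_iSup_of_mem hi <| Submodule.mem_map_of_mem hc

theorem H0_le_yFiltration_succ (m : ℕ) : H0 ≤ yFiltration (m + 1) :=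
  yFiltration_succ_eq_H0_sup m ▸ le_sup_left

theorem Y_mul_mem_yFiltration {m : ℕ} {v : H} (hv : v ∈ yFiltration m) :
    Y * v ∈ yFiltration (m + 1) :=
  yFiltration_succ_eq_H0_sup m ▸ Submodule.mem_sup_right (Submodule.mem_map_of_mem hv)

theorem yFiltration_mono : Monotone yFiltration :=
  monotone_nat_of_le_succ fun m => yFiltration_succ m ▸ le_sup_left

theorem yFiltration_le {m : ℕ} {N : Submodule ℚ H}
    (h : ∀ i < m, ∀ c ∈ H0, Y ^ i * c ∈ N) : yFiltration m ≤ N :=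
  iSup₂_le fun i hi => Submodule.map_le_iff_le_comap.2 (h i hi)

theorem eq_zero_of_Y_pow_mul_mem_yFiltration {m : ℕ} {c : H} (h : Y ^ m * c ∈ yFiltration m) :
    c = 0 := by
  induction m with
  | zero => simpa [yFiltration_zero] using h
  | succ m ih =>
    rw [yFiltration_succ_eq_H0_sup] at h
    obtain ⟨d, hd, _, ⟨f, hf, rfl⟩, hsum⟩ := Submodule.mem_sup.1 h
    have hY : Y * (Y ^ m * c - f) = d := by
      rw [mul_sub, ← mul_assoc, ← pow_succ', ← hsum, LinearMap.mulLeft_apply, add_sub_cancel_right]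
    have hf' : Y ^ m * c = f := sub_eq_zero.1 (eq_zero_of_Y_mul_mem_H0 (hY ▸ hd))
    exact ih (hf' ▸ hf)

theorem nharm_Y_pow_mul_sub_mem {c d : H} (hc : c ∈ H0) (hd : d ∈ H0) (m : ℕ) :
    nharm c (Y ^ m * d) - Y ^ m * nharm c d ∈ yFiltration m := by
  induction m with
  | zero => simp
  | succ m ih =>
    have hY := nharm_Y_mul_sub_mem_H0 hc (Y_pow_mul_mem_H1 m (H0_le_H1 hd))
    convert add_mem (H0_le_yFiltration_succ m hY) (Y_mul_mem_yFiltration ih) using 1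
    rw [pow_succ', mul_assoc, mul_assoc, mul_sub, sub_add_sub_cancel]

theorem nharm_mem_yFiltration {m : ℕ} {c v : H} (hc : c ∈ H0) (hv : v ∈ yFiltration m) :
    nharm c v ∈ yFiltration m := by
  suffices yFiltration m ≤ (yFiltration m).comap (nharmₗ c) from this hv
  refine yFiltration_le fun i hi d hd => ?_
  rw [Submodule.mem_comap, ← sub_add_cancel (nharmₗ c (Y ^ i * d)) (Y ^ i * nharm c d)]
  exact add_mem (yFiltration_mono hi.le (nharm_Y_pow_mul_sub_mem hc hd i))
    (Y_pow_mul_mem_yFiltration hi (nharm_mem_H0 hc hd))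

theorem Y_nharm_Y_pow_mul_sub_mem {d : H} (hd : d ∈ H0) (m : ℕ) :
    nharm Y (Y ^ m * d) - (m + 1 : ℚ) • (Y ^ (m + 1) * d) ∈ yFiltration (m + 1) := by
  induction m with
  | zero => simpa using H0_le_yFiltration_succ 0 (Y_nharm_sub_mem_H0 hd)
  | succ m ih =>
    have hY := Y_nharm_Y_mul_sub_mem_H0 (Y_pow_mul_mem_H1 m (H0_le_H1 hd))
    convert add_mem (H0_le_yFiltration_succ (m + 1) hY) (Y_mul_mem_yFiltration ih) using 1
    simp only [pow_succ', mul_assoc, mul_add, mul_sub, mul_smul_comm, Nat.cast_succ]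
    module

theorem Y_nharm_mem_yFiltration {m : ℕ} {v : H} (hv : v ∈ yFiltration m) :
    nharm Y v ∈ yFiltration (m + 1) := by
  suffices yFiltration m ≤ (yFiltration (m + 1)).comap (nharmₗ Y) from this hv
  refine yFiltration_le fun i hi d hd => ?_
  rw [Submodule.mem_comap,
    ← sub_add_cancel (nharmₗ Y (Y ^ i * d)) ((i + 1 : ℚ) • (Y ^ (i + 1) * d))]
  exact add_mem (yFiltration_mono (by omega) (Y_nharm_Y_pow_mul_sub_mem hd i))
    (Submodule.smul_mem _ _ (Y_pow_mul_mem_yFiltration (by omega) hd))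

theorem nharmPow_Y_sub_mem (m : ℕ) :
    nharmPow m Y - (m.factorial : ℚ) • Y ^ m ∈ yFiltration m := by
  induction m with
  | zero => simp [nharmPow]
  | succ m ih =>
    have hlead := Y_nharm_Y_pow_mul_sub_mem one_mem_H0 m
    rw [mul_one, mul_one] at hlead
    convert add_mem (Y_nharm_mem_yFiltration ih)
      (Submodule.smul_mem _ (m.factorial : ℚ) hlead) using 1
    change _ = nharmₗ Y _ + _ • (nharmₗ Y _ - _)
    rw [map_sub, map_smul, Nat.factorial_succ, nharmPow]
    change nharmₗ Y _ - _ = _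
    push_cast
    module

theorem nharm_nharmPow_Y_sub_mem {c : H} (hc : c ∈ H0) (m : ℕ) :
    nharm c (nharmPow m Y) - (m.factorial : ℚ) • (Y ^ m * c) ∈ yFiltration m := by
  have hlead := nharm_Y_pow_mul_sub_mem hc one_mem_H0 m
  rw [mul_one, nharm_one (H0_le_H1 hc)] at hlead
  convert add_mem (nharm_mem_yFiltration hc (nharmPow_Y_sub_mem m))
    (Submodule.smul_mem _ (m.factorial : ℚ) hlead) using 1
  change nharmₗ c _ - _ = nharmₗ c _ + _ • (nharmₗ c _ - _)
  rw [map_sub, map_smul]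
  module

theorem yFiltration_succ_eq_sup_map_nharm (m : ℕ) :
    yFiltration (m + 1) = yFiltration m ⊔ H0.map (nharmₗ.flip (nharmPow m Y)) := by
  have hm : (m.factorial : ℚ) ≠ 0 := mod_cast m.factorial_ne_zero
  rw [yFiltration_succ, ← Submodule.map_smul _ _ _ hm]
  exact (sup_map_eq_sup_map_of_sub_mem fun c hc => nharm_nharmPow_Y_sub_mem hc m).symm

theorem eq_zero_of_nharm_nharmPow_Y_mem {m : ℕ} {c : H} (hc : c ∈ H0)
    (h : nharm c (nharmPow m Y) ∈ yFiltration m) : c = 0 := by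
  have hm : (m.factorial : ℚ) ≠ 0 := mod_cast m.factorial_ne_zero
  have hlead : (m.factorial : ℚ) • (Y ^ m * c) ∈ yFiltration m := by
    simpa using sub_mem h (nharm_nharmPow_Y_sub_mem hc m)
  exact eq_zero_of_Y_pow_mul_mem_yFiltration ((Submodule.smul_mem_iff _ hm).1 hlead)

end H

theorem nharm_polynomial_representation_general {m : ℕ} {v : H} (hv : v ∈ yFiltration m) :
    ∃! c : Fin m → H, (∀ i, c i ∈ H0) ∧ v = ∑ i, nharm (c i) (nharmPow i.1 Y) :=
  existsUnique_sum_of_succ_eq_sup_map (g := fun i => nharmₗ.flip (nharmPow i Y)) yFiltration_zero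
    yFiltration_succ_eq_sup_map_nharm (fun _ _ => eq_zero_of_nharm_nharmPow_Y_mem) hv

/-- Every element `yᵐ w` of `H¹` (`m ≥ 0`, `w` a word of `H⁰`) has a unique
representation `yᵐ w = w₀ + w₁ *̄ y + ⋯ + wₘ *̄ y^{*̄ m}` with all `wᵢ ∈ H⁰`;
consequently `(H¹, *̄) ≃ (H⁰, *̄)[y]`. -/
theorem nharm_polynomial_representation (m : ℕ) (w : FreeMonoid Letter)
    (hw : word w ∈ H0) :
    ∃! c : Fin (m + 1) → H,
      (∀ i, c i ∈ H0) ∧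
      word (FreeMonoid.ofList (List.replicate m Letter.y) * w) =
        ∑ i : Fin (m + 1), nharm (c i) (nharmPow i.1 Y) := by
  rw [← word_mul_word, ofList_replicate, ← word_pow]
  exact nharm_polynomial_representation_general (Y_pow_mul_mem_yFiltration m.lt_succ_self hw)
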